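/- Let S be a central simple algebra over a field Q and let R ⊆ S be a subring with center Z(R). Then R is an order of S if and only if Z(R) is an integral domain whose field of fractions is Q and R·Q = S. -/

import Mathlib

/-- `R` is an order in `S`: every `x ∈ S` can be written as `a b⁻¹` and as
`c⁻¹ d` with `a, b, c, d ∈ R` (the inverses taken in `S`). -/
def IsOrderIn {S : Type*} [Ring S] (R : Subring S) : Prop :=
  ∀ x : S,
    (∃ a b bi : S, a ∈ R ∧ b ∈ R ∧ b * bi = 1 ∧ bi * b = 1 ∧ x = a * bi) ∧
    (∃ c d ci : S, c ∈ R ∧ d ∈ R ∧ c * ci = 1 ∧ ci * c = 1 ∧ x = ci * d)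

/-!
If `R` is an order, any finite family in `S` has a common left and a common right denominator in
`R`. As `S` is central simple, a linear functional `φ : S → Q` has the form
`φ x • 1 = ∑ aᵢ * x * bᵢ`, so clearing the denominators of the `aᵢ` on the left and of the `bᵢ` on
the right gives a unit `d` with `φ x • d ∈ R` for all `x ∈ R`. Scalars `q` can be absorbed into
the argument of `φ`: if `u` is a common denominator of finitely many `q`s, then
`(φ (x * u) * q) • d = φ (x * (q • u)) • d` lies in `R`. Writing `d⁻¹ * s` as a `Q`-combination of
elements of `R`, this yields a nonzero `k : Q` with `k • s ∈ R`. Hence `R` is an order iff every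
element of `S` has a nonzero scalar denominator in `R`, which is what the conditions on the center
and on the span express.
-/

open scoped TensorProduct Pointwise

/-- `R` has scalar denominators over `Q` if `S` is the localization of `R` at the nonzero scalars
contained in `R`: every element of `S` has the form `k⁻¹ • r` with `r ∈ R`, where `k : Q` is
nonzero and its image in `S` lies in `R`. -/
def HasScalarDenominators (Q : Type*) {S : Type*} [Field Q] [Ring S] [Algebra Q S]
    (R : Subring S) : Prop :=
  ∀ x : S, ∃ k : Q, k ≠ 0 ∧ algebraMap Q S k ∈ R ∧ k • x ∈ R

section MultiplicationAlgebra

attribute [local instance] TensorProduct.Algebra.module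

theorem isSimpleModule_tensorProduct_mulOpposite (Q S : Type*) [CommRing Q] [Ring S] [Algebra Q S]
    [IsSimpleRing S] : IsSimpleModule (S ⊗[Q] Sᵐᵒᵖ) S := by
  refine isSimpleModule_iff_toSpanSingleton_surjective.2 ⟨inferInstance, fun x hx y => ?_⟩
  have hy : y ∈ TwoSidedIdeal.span {x} := by
    have hx_mem : x ∈ TwoSidedIdeal.span {x} := TwoSidedIdeal.subset_span rfl
    simpa using TwoSidedIdeal.mul_mem_left _ y 1 (IsSimpleRing.one_mem_of_ne_zero_mem _ hx hx_mem)
  rw [TwoSidedIdeal.mem_span_iff_mem_addSubgroup_closure] at hy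
  let N : Submodule (S ⊗[Q] Sᵐᵒᵖ) S := (LinearMap.toSpanSingleton (S ⊗[Q] Sᵐᵒᵖ) S x).range
  suffices Set.univ * {x} * Set.univ ⊆ (N : Set S) from
    (AddSubgroup.closure_le N.toAddSubgroup).2 this hy
  rintro _ ⟨_, ⟨a, -, _, rfl, rfl⟩, b, -, rfl⟩
  exact ⟨a ⊗ₜ MulOpposite.op b, by simp [TensorProduct.Algebra.smul_def, mul_assoc]⟩

theorem exists_forall_end_tensorProduct_mulOpposite_apply_eq_smul {Q S : Type*} [CommRing Q]
    [Ring S] [Algebra Q S] [Algebra.IsCentral Q S] (g : Module.End (S ⊗[Q] Sᵐᵒᵖ) S) :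
    ∃ k : Q, ∀ x, g x = k • x := by
  have map_mul_left (a x : S) : g (a * x) = a * g x := by
    simpa [TensorProduct.Algebra.smul_def] using g.map_smul (a ⊗ₜ 1) x
  have map_mul_right (x b : S) : g (x * b) = g x * b := by
    simpa [TensorProduct.Algebra.smul_def] using g.map_smul (1 ⊗ₜ MulOpposite.op b) x
  have g_one_mem_center : g 1 ∈ Subalgebra.center Q S := Subalgebra.mem_center_iff.2 fun x => by
    rw [← map_mul_left, ← map_mul_right, mul_one, one_mul]
  obtain ⟨k, hk⟩ := (Algebra.IsCentral.mem_center_iff Q).1 g_one_mem_center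
  exact ⟨k, fun x => by rw [← one_mul x, map_mul_right, hk, one_mul, Algebra.smul_def]⟩

theorem mulLeftRight_surjective (Q S : Type*) [CommRing Q] [Ring S] [Algebra Q S]
    [Module.Finite Q S] [IsSimpleRing S] [Algebra.IsCentral Q S] :
    Function.Surjective (AlgHom.mulLeftRight Q S) := by
  intro f
  have := isSimpleModule_tensorProduct_mulOpposite Q S
  let F : Module.End (Module.End (S ⊗[Q] Sᵐᵒᵖ) S) S :=
    { toFun := f
      map_add' := f.map_add
      map_smul' := fun g x => by
        obtain ⟨k, hk⟩ := exists_forall_end_tensorProduct_mulOpposite_apply_eq_smul g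
        simp only [Module.End.smul_def, hk, RingHom.id_apply, map_smul] }
  obtain ⟨s, hs⟩ := Module.Finite.fg_top (R := Q) (M := S)
  obtain ⟨t, ht⟩ := jacobson_density F s
  exact ⟨t, LinearMap.ext_on hs fun x hx => (ht x hx).symm⟩

end MultiplicationAlgebra

namespace IsOrderIn

section Ring

variable {S : Type*} [Ring S] {R : Subring S}

theorem exists_left_denominator (h : IsOrderIn R) (x : S) : ∃ c : Sˣ, (c : S) ∈ R ∧ c * x ∈ R := by
  obtain ⟨c, d, c', hc, hd, hcc', hc'c, rfl⟩ := (h x).2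
  exact ⟨⟨c, c', hcc', hc'c⟩, hc, by simpa [← mul_assoc, hcc'] using hd⟩

theorem exists_right_denominator (h : IsOrderIn R) (x : S) : ∃ b : Sˣ, (b : S) ∈ R ∧ x * b ∈ R := by
  obtain ⟨a, b, b', ha, hb, hbb', hb'b, rfl⟩ := (h x).1
  exact ⟨⟨b, b', hbb', hb'b⟩, hb, by simpa [mul_assoc, hb'b] using ha⟩

theorem exists_common_left_denominator (h : IsOrderIn R) {ι : Type*} (s : Finset ι) (x : ι → S) :
    ∃ c : Sˣ, (c : S) ∈ R ∧ ∀ i ∈ s, c * x i ∈ R := by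
  induction s using Finset.cons_induction with
  | empty => exact ⟨1, R.one_mem, by simp⟩
  | cons j s hj ih =>
    obtain ⟨c, hc, hcx⟩ := ih
    obtain ⟨d, hd, hdx⟩ := h.exists_left_denominator (c * x j)
    refine ⟨d * c, R.mul_mem hd hc, (Finset.forall_mem_cons hj _).2 ⟨?_, fun i hi => ?_⟩⟩
    · simpa only [Units.val_mul, mul_assoc] using hdx
    · simpa only [Units.val_mul, mul_assoc] using R.mul_mem hd (hcx i hi)

theorem exists_common_right_denominator (h : IsOrderIn R) {ι : Type*} (s : Finset ι) (x : ι → S) :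
    ∃ b : Sˣ, (b : S) ∈ R ∧ ∀ i ∈ s, x i * b ∈ R := by
  induction s using Finset.cons_induction with
  | empty => exact ⟨1, R.one_mem, by simp⟩
  | cons j s hj ih =>
    obtain ⟨b, hb, hxb⟩ := ih
    obtain ⟨d, hd, hxd⟩ := h.exists_right_denominator (x j * b)
    refine ⟨b * d, R.mul_mem hb hd, (Finset.forall_mem_cons hj _).2 ⟨?_, fun i hi => ?_⟩⟩
    · simpa only [Units.val_mul, mul_assoc] using hxd
    · simpa only [Units.val_mul, mul_assoc] using R.mul_mem (hxb i hi) hd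

theorem exists_units_forall_mul_mulLeftRight_mul_mem {Q : Type*} [CommRing Q] [Algebra Q S]
    (h : IsOrderIn R) (t : S ⊗[Q] Sᵐᵒᵖ) :
    ∃ c b : Sˣ, ∀ x ∈ R, c * AlgHom.mulLeftRight Q S t x * b ∈ R := by
  obtain ⟨s, rfl⟩ := TensorProduct.exists_finset t
  obtain ⟨c, -, hc_mul⟩ := h.exists_common_left_denominator s Prod.fst
  obtain ⟨b, -, hmul_b⟩ := h.exists_common_right_denominator s fun i => i.2.unop
  refine ⟨c, b, fun x hx => ?_⟩
  simp only [map_sum, LinearMap.sum_apply, AlgHom.mulLeftRight_apply, Finset.mul_sum,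
    Finset.sum_mul]
  refine sum_mem fun i hi => ?_
  simpa only [mul_assoc] using R.mul_mem (R.mul_mem (hc_mul i hi) hx) (hmul_b i hi)

end Ring

variable {Q S : Type*} [Field Q] [Ring S] [Algebra Q S] {R : Subring S}

theorem span_eq_top [FiniteDimensional Q S] (h : IsOrderIn R) :
    Submodule.span Q (R : Set S) = ⊤ := by
  refine eq_top_iff.2 fun x _ => ?_
  obtain ⟨b, hb, hxb⟩ := h.exists_right_denominator x
  let N := Submodule.span Q (R : Set S)
  have mul_b_mem : ∀ y ∈ N, LinearMap.mulRight Q (b : S) y ∈ N :=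
    (Submodule.span_le (p := N.comap (LinearMap.mulRight Q (b : S)))).2 fun r hr =>
      Submodule.subset_span (R.mul_mem hr hb)
  have mul_b_injective : Function.Injective ((LinearMap.mulRight Q (b : S)).restrict mul_b_mem) :=
    fun y z hyz => Subtype.ext (b.isUnit.mul_left_injective (congrArg Subtype.val hyz))
  obtain ⟨y, hy⟩ :=
    LinearMap.surjective_of_injective mul_b_injective ⟨x * b, Submodule.subset_span hxb⟩
  have y_eq_x : (y : S) = x := b.isUnit.mul_left_injective (congrArg Subtype.val hy)
  exact y_eq_x ▸ y.2

theorem exists_unit_forall_dual_smul_mem [FiniteDimensional Q S] [IsSimpleRing S]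
    [Algebra.IsCentral Q S] (h : IsOrderIn R) (φ : Module.Dual Q S) :
    ∃ d : Sˣ, ∀ x ∈ R, φ x • (d : S) ∈ R := by
  obtain ⟨t, ht⟩ := mulLeftRight_surjective Q S (Algebra.linearMap Q S ∘ₗ φ)
  obtain ⟨c, b, hcb⟩ := h.exists_units_forall_mul_mulLeftRight_mul_mem t
  refine ⟨c * b, fun x hx => ?_⟩
  simpa [ht, Algebra.algebraMap_eq_smul_one] using hcb x hx

theorem exists_ne_zero_forall_mul_smul_mem [FiniteDimensional Q S] (h : IsOrderIn R)
    {φ : Module.Dual Q S} (hφ : φ ≠ 0) {d : S} (hd : ∀ x ∈ R, φ x • d ∈ R)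
    {ι : Type*} (s : Finset ι) (q : ι → Q) :
    ∃ k : Q, k ≠ 0 ∧ ∀ i ∈ s, (k * q i) • d ∈ R := by
  obtain ⟨u, -, hu⟩ := h.exists_common_right_denominator s fun i => algebraMap Q S (q i)
  obtain ⟨r, hr, hφr⟩ : ∃ r ∈ R, φ (r * u) ≠ 0 := by
    by_contra! hφu
    have comp_eq_zero : φ ∘ₗ LinearMap.mulRight Q (u : S) = 0 := LinearMap.ext_on h.span_eq_top hφu
    exact hφ (LinearMap.ext fun x => by simpa using LinearMap.congr_fun comp_eq_zero (x * ↑u⁻¹))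
  refine ⟨φ (r * u), hφr, fun i hi => ?_⟩
  have absorb : φ (r * u) * q i = φ (r * (algebraMap Q S (q i) * u)) := by
    rw [← Algebra.smul_def, mul_smul_comm, map_smul, smul_eq_mul, mul_comm]
  exact absorb ▸ hd _ (R.mul_mem hr (hu i hi))

theorem exists_common_scalar_denominator [FiniteDimensional Q S] [IsSimpleRing S]
    [Algebra.IsCentral Q S] (h : IsOrderIn R) {ι : Type*} (s : Finset ι) (x : ι → S) :
    ∃ k : Q, k ≠ 0 ∧ ∀ i ∈ s, k • x i ∈ R := by
  obtain ⟨φ, hφ⟩ := exists_ne (0 : Module.Dual Q S)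
  obtain ⟨d, hφd⟩ := h.exists_unit_forall_dual_smul_mem φ
  let e := Module.Basis.ofSpan (h.span_eq_top (Q := Q)).ge
  have he (j) : e j ∈ R := Module.Basis.ofSpan_subset (h.span_eq_top (Q := Q)).ge ⟨j, rfl⟩
  have : Fintype _ := FiniteDimensional.fintypeBasisIndex e
  obtain ⟨k, hk, hkd⟩ := h.exists_ne_zero_forall_mul_smul_mem hφ hφd (s ×ˢ Finset.univ)
    fun p => e.repr (↑d⁻¹ * x p.1) p.2
  refine ⟨k, hk, fun i hi => ?_⟩
  have expansion : k • x i = ∑ j, ((k * e.repr (↑d⁻¹ * x i) j) • (d : S)) * e j :=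
    calc k • x i = k • (d * ∑ j, e.repr (↑d⁻¹ * x i) j • e j) := by
          rw [e.sum_repr, Units.mul_inv_cancel_left]
      _ = _ := by
        simp only [Finset.mul_sum, Finset.smul_sum, mul_smul_comm, smul_mul_assoc, smul_smul]
  rw [expansion]
  exact sum_mem fun j _ => R.mul_mem (hkd (i, j) (by simp [hi])) (he j)

theorem hasScalarDenominators [FiniteDimensional Q S] [IsSimpleRing S] [Algebra.IsCentral Q S]
    (h : IsOrderIn R) : HasScalarDenominators Q R := by
  intro x
  obtain ⟨k, hk, hkR⟩ := h.exists_common_scalar_denominator (Q := Q) Finset.univ ![1, x]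
  exact ⟨k, hk, by simpa [Algebra.algebraMap_eq_smul_one] using hkR 0, by simpa using hkR 1⟩

end IsOrderIn

theorem HasScalarDenominators.isOrderIn {Q S : Type*} [Field Q] [Ring S] [Algebra Q S]
    {R : Subring S} (h : HasScalarDenominators Q R) : IsOrderIn R := by
  intro x
  obtain ⟨k, hk, hkR, hkx⟩ := h x
  have mul_inv : algebraMap Q S k * algebraMap Q S k⁻¹ = 1 := by
    rw [← map_mul, mul_inv_cancel₀ hk, map_one]
  have inv_mul : algebraMap Q S k⁻¹ * algebraMap Q S k = 1 := by
    rw [← map_mul, inv_mul_cancel₀ hk, map_one]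
  have x_eq : x = algebraMap Q S k⁻¹ * (k • x) := by
    rw [← Algebra.smul_def, inv_smul_smul₀ hk]
  exact ⟨⟨k • x, _, _, hkx, hkR, mul_inv, inv_mul, by rwa [← Algebra.commutes]⟩,
    ⟨_, k • x, _, hkR, hkx, mul_inv, inv_mul, x_eq⟩⟩

theorem mem_center_of_span_eq_top {Q S : Type*} [CommSemiring Q] [Ring S] [Algebra Q S] {s : Set S}
    (hs : Submodule.span Q s = ⊤) {z : S} (hz : ∀ r ∈ s, z * r = r * z) :
    z ∈ Subring.center S :=
  have mulLeft_eq : LinearMap.mulLeft Q z = LinearMap.mulRight Q z := LinearMap.ext_on hs hz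
  Subring.mem_center_iff.2 fun x => (LinearMap.congr_fun mulLeft_eq x).symm

theorem hasScalarDenominators_of_span_eq_top {Q S : Type*} [Field Q] [Ring S]
    [Algebra Q S] {R : Subring S} (hspan : Submodule.span Q (R : Set S) = ⊤)
    (hfrac : ∀ q : Q, ∃ k : Q, k ≠ 0 ∧ algebraMap Q S k ∈ R ∧ algebraMap Q S (k * q) ∈ R) :
    HasScalarDenominators Q R := by
  intro x
  have hx : x ∈ Submodule.span Q (R : Set S) := hspan ▸ Submodule.mem_top
  induction hx using Submodule.span_induction with
  | mem x hx => exact ⟨1, one_ne_zero, by simp [R.one_mem], by simpa using hx⟩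
  | zero => exact ⟨1, one_ne_zero, by simp [R.one_mem], by simp [R.zero_mem]⟩
  | add x y _ _ ihx ihy =>
    obtain ⟨k, hk, hkR, hkx⟩ := ihx
    obtain ⟨l, hl, hlR, hly⟩ := ihy
    have expansion : (k * l) • (x + y) =
        algebraMap Q S l * (k • x) + algebraMap Q S k * (l • y) := by
      rw [← Algebra.smul_def, ← Algebra.smul_def, smul_smul, smul_smul, smul_add, mul_comm l k]
    refine ⟨k * l, mul_ne_zero hk hl, by simpa using R.mul_mem hkR hlR, ?_⟩
    exact expansion ▸ R.add_mem (R.mul_mem hlR hkx) (R.mul_mem hkR hly)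
  | smul q x _ ih =>
    obtain ⟨k, hk, hkR, hkx⟩ := ih
    obtain ⟨l, hl, hlR, hlq⟩ := hfrac q
    have expansion : (l * k) • q • x = algebraMap Q S (l * q) * (k • x) := by
      rw [← Algebra.smul_def, smul_smul, smul_smul, mul_right_comm]
    refine ⟨l * k, mul_ne_zero hl hk, by simpa using R.mul_mem hlR hkR, ?_⟩
    exact expansion ▸ R.mul_mem hlq hkx

/-- Let `S` be a central simple algebra over a field `Q` and
`R ⊆ S` a subring with center `Z(R)`.  Then `R` is an order of `S` iff
(i) `Z(R)` is an integral domain whose field of fractions is `Q` (equivalently: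
`Z(R)` has no zero divisors, lies in `Q = Z(S)`, and every element of `Q` is a
fraction of elements of `Z(R)`), and (ii) `R·Q = S`. -/
theorem statement2 {Q S : Type*} [Field Q] [Ring S] [Algebra Q S]
    [FiniteDimensional Q S] [IsSimpleRing S]
    (hcen : Subring.center S = (algebraMap Q S).range)
    (R : Subring S) :
    IsOrderIn R ↔
      ((∀ z w : S, z ∈ R → w ∈ R → (∀ r ∈ R, z * r = r * z) → (∀ r ∈ R, w * r = r * w) →
          z * w = 0 → z = 0 ∨ w = 0) ∧
        (∀ z ∈ R, (∀ r ∈ R, z * r = r * z) → z ∈ (algebraMap Q S).range) ∧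
        (∀ q : Q, ∃ z w : S, z ∈ R ∧ w ∈ R ∧ (∀ r ∈ R, z * r = r * z) ∧
          (∀ r ∈ R, w * r = r * w) ∧ w ≠ 0 ∧ algebraMap Q S q * w = z) ∧
        Submodule.span Q (R : Set S) = ⊤) := by
  have : Algebra.IsCentral Q S := ⟨fun z hz => hcen.le hz⟩
  have algebraMap_injective := FaithfulSMul.algebraMap_injective Q S
  constructor
  · intro h
    have hcenter (z : S) (_ : z ∈ R) (hz : ∀ r ∈ R, z * r = r * z) :
        z ∈ (algebraMap Q S).range := hcen ▸ mem_center_of_span_eq_top (h.span_eq_top (Q := Q)) hz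
    refine ⟨fun z w hzR hwR hz hw hzw => ?_, hcenter, fun q => ?_, h.span_eq_top⟩
    · obtain ⟨a, rfl⟩ := hcenter z hzR hz
      obtain ⟨b, rfl⟩ := hcenter w hwR hw
      simpa [← map_mul, map_eq_zero_iff _ algebraMap_injective] using hzw
    · obtain ⟨k, hk, hkR, hkq⟩ := h.hasScalarDenominators (Q := Q) (algebraMap Q S q)
      exact ⟨k • algebraMap Q S q, algebraMap Q S k, hkq, hkR, by simp [Algebra.commutes],
        fun r _ => Algebra.commutes k r, by simpa using hk,
        by rw [← Algebra.commutes, Algebra.smul_def]⟩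
  · rintro ⟨-, hcenter, hfrac, hspan⟩
    refine (hasScalarDenominators_of_span_eq_top hspan fun q => ?_).isOrderIn
    obtain ⟨z, w, hzR, hwR, -, hw, hw0, rfl⟩ := hfrac q
    obtain ⟨k, rfl⟩ := hcenter w hwR hw
    exact ⟨k, by simpa using hw0, hwR, by rwa [mul_comm, map_mul]⟩
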